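/- arXiv:1208.0446 — 4 statements merged into one kernel-verified Lean document; each statement's English description precedes it below -/
import Mathlib

section
/- Let A_i (i = 1,…,n) be finite nonempty sets and for each a ∈ A_i let f^a_i : ℝⁿ → ℝ be polyhedral, order-preserving, additively homogeneous and convex; define f_i(x) = min_{a∈A_i} f^a_i(x) and f^{(σ)}_i = f^{σ(i)}_i for strategies σ ∈ ∏_i A_i. Suppose strategies σ_0,…,σ_K and half-lines w^{(k)}(t) = tη^{(k)} + v^{(k)} (0 ≤ k ≤ K) satisfy: (a) each w^{(k)} is an invariant half-line of f^{(σ_k)}; (b) for each k < K, it is not the case that f(w^{(k)}(t)) = w^{(k)}(t+1) for all sufficiently large t; (c) for each k < K, f^{(σ_{k+1})}(w^{(k)}(t)) = f(w^{(k)}(t)) for all sufficiently large t; (d) for each k < K and each i such that f_i(w^{(k)}(t)) = f^{(σ_k)}_i(w^{(k)}(t)) for all sufficiently large t, one has σ_{k+1}(i) = σ_k(i); (e) for each k < K with η^{(k+1)} = η^{(k)}, one has v^{(k+1)} = lim_{m→∞} ḡ^m(v^{(k)}), where ḡ : ℝⁿ → ℝⁿ is defined by ḡ(y) = lim_{t→∞}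 (f^{(σ_{k+1})}(tη^{(k+1)} + y) − (t+1)η^{(k+1)}) (these limits exist). Then σ_s ≠ σ_m for all 0 ≤ s < m ≤ K; in particular K < ∏_i |A_i|, so the policy iteration algorithm terminates after finitely many iterations. -/
open Filter Topology

/-- A function `g : ℝⁿ → ℝ` is polyhedral: there is a covering of `ℝⁿ` by finitely many
convex polyhedra (finite intersections of half-spaces) on each of which `g` is affine. -/
def IsPolyhedralFun {n : ℕ} (g : (Fin n → ℝ) → ℝ) : Prop :=
  ∃ (m : ℕ) (C : Fin m → Set (Fin n → ℝ)),
    (⋃ k, C k) = Set.univ ∧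
    ∀ k : Fin m,
      (∃ (p : ℕ) (a : Fin p → Fin n → ℝ) (b : Fin p → ℝ),
        C k = {x | ∀ l, ∑ j, a l j * x j ≤ b l}) ∧
      ∃ (A : Fin n → ℝ) (c : ℝ), ∀ x ∈ C k, g x = (∑ j, A j * x j) + c

/-- Existence of a (stochastic) subgradient. -/
lemma exists_stoch_subgrad {n : ℕ} (F : (Fin n → ℝ) → ℝ)
    (hmono : ∀ x y : Fin n → ℝ, x ≤ y → F x ≤ F y)
    (hah : ∀ (lam : ℝ) (x : Fin n → ℝ), F (fun j => lam + x j) = lam + F x)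
    (hconv : ConvexOn ℝ Set.univ F) (u : Fin n → ℝ) :
    ∃ q : Fin n → ℝ, (∀ j, 0 ≤ q j) ∧ ∑ j, q j = 1 ∧
      ∀ x, F u + ∑ j, q j * (x j - u j) ≤ F x := by
  have hcont : Continuous F := hconv.locallyLipschitz.continuous
  have hopen : IsOpen {p : (Fin n → ℝ) × ℝ | p.1 ∈ Set.univ ∧ F p.1 < p.2} := by
    have : {p : (Fin n → ℝ) × ℝ | p.1 ∈ Set.univ ∧ F p.1 < p.2} = {p | F p.1 < p.2} := by
      ext; simp
    rw [this]
    exact isOpen_lt (hcont.comp continuous_fst) continuous_snd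
  obtain ⟨L, hL⟩ := geometric_hahn_banach_open_point (x := (u, F u))
    hconv.convex_strict_epigraph hopen (by simp)
  have hdec : ∀ (x : Fin n → ℝ) (r : ℝ), L (x, r) = L (x, 0) + r * L (0, 1) := by
    intro x r
    have : ((x, r) : (Fin n → ℝ) × ℝ) = (x, 0) + r • (0, 1) := by simp
    rw [this, map_add, map_smul, smul_eq_mul]
  have hc : L (0, 1) < 0 := by
    have h1 := hL (u, F u + 1) (by simp)
    rw [hdec u (F u + 1), hdec u (F u)] at h1
    linarith
  set c := L (0, 1) with hcdef
  have hle : ∀ x, L (x, 0) + F x * c ≤ L (u, 0) + F u * c := by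
    intro x
    have h2 : ∀ ε : ℝ, 0 < ε → L (x, 0) + F x * c ≤ L (u, 0) + F u * c + ε := by
      intro ε hε
      have h1 := hL (x, F x + ε / (-c)) (by simpa using div_pos hε (neg_pos.2 hc))
      rw [hdec x, hdec u (F u)] at h1
      have : ε / (-c) * c = -ε := by
        have hc0 : c ≠ 0 := hc.ne
        field_simp
      nlinarith
    exact le_of_forall_pos_le_add h2
  have hsum : ∀ x : Fin n → ℝ, L (x, 0) = ∑ j, x j * L (Pi.single j 1, 0) := by
    intro x
    have : L (x, 0) = (L.comp (ContinuousLinearMap.inl ℝ (Fin n → ℝ) ℝ)).toLinearMap x := by simp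
    rw [this, LinearMap.pi_apply_eq_sum_univ]
    refine Finset.sum_congr rfl fun j _ => ?_
    have e : (fun k => if j = k then (1 : ℝ) else 0) = Pi.single j 1 := by
      ext k
      simp [Pi.single_apply, eq_comm]
    rw [e]
    simp
  set q : Fin n → ℝ := fun j => L (Pi.single j 1, 0) / (-c) with hq
  have hsub : ∀ x, F u + ∑ j, q j * (x j - u j) ≤ F x := by
    intro x
    have h1 := hle x
    have h2 : ∑ j, q j * (x j - u j) = (L (x, 0) - L (u, 0)) / (-c) := by
      rw [hsum x, hsum u, ← Finset.sum_sub_distrib, Finset.sum_div]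
      refine Finset.sum_congr rfl fun j _ => ?_
      simp only [hq]; ring
    have h3 : (L (x, 0) - L (u, 0)) / (-c) ≤ F x - F u := by
      rw [div_le_iff₀ (neg_pos.2 hc)]; linarith
    linarith
  refine ⟨q, ?_, ?_, hsub⟩
  · intro j
    have h1 := hsub (u - Pi.single j 1)
    have h2 := hmono (u - Pi.single j 1) u (by
      intro k
      by_cases hk : k = j
      · subst hk; simp
      · simp [hk])
    have h3 : ∑ k, q k * ((u - Pi.single j 1 : Fin n → ℝ) k - u k) = - q j := by
      simp [Pi.single_apply]
    linarith
  · have h1 := hsub (fun j => 1 + u j)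
    have h2 := hsub (fun j => -1 + u j)
    rw [hah] at h1 h2
    simp only [add_sub_cancel_right, mul_one, mul_neg, Finset.sum_neg_distrib] at h1 h2
    linarith

/-- `Q` restricted to `C` is a stochastic matrix whose rows are subgradients of `g` at the
fixed point `v`. -/
def ClosedClass {n : ℕ} (g : (Fin n → ℝ) → (Fin n → ℝ)) (v : Fin n → ℝ)
    (Q : Fin n → Fin n → ℝ) (C : Finset (Fin n)) : Prop :=
  ∀ i ∈ C, (∀ j, 0 ≤ Q i j) ∧ ∑ j, Q i j = 1 ∧ (∀ j, j ∉ C → Q i j = 0) ∧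
    ∀ x, v i + ∑ j, Q i j * (x j - v j) ≤ g x i

lemma stoch_lower {n : ℕ} (q : Fin n → ℝ) (C : Finset (Fin n)) (h0 : ∀ j, 0 ≤ q j)
    (h1 : ∑ j, q j = 1) (hC : ∀ j, j ∉ C → q j = 0) (y : Fin n → ℝ) (δ : ℝ)
    (hy : ∀ j ∈ C, δ ≤ y j) : δ ≤ ∑ j, q j * y j := by
  calc δ = ∑ j, q j * δ := by rw [← Finset.sum_mul, h1, one_mul]
    _ ≤ _ := by
      refine Finset.sum_le_sum fun j _ => ?_
      by_cases hj : j ∈ C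
      · exact mul_le_mul_of_nonneg_left (hy j hj) (h0 j)
      · simp [hC j hj]

lemma stoch_lower_eq {n : ℕ} (q : Fin n → ℝ) (C : Finset (Fin n)) (h0 : ∀ j, 0 ≤ q j)
    (h1 : ∑ j, q j = 1) (hC : ∀ j, j ∉ C → q j = 0) (y : Fin n → ℝ) (δ : ℝ)
    (hy : ∀ j ∈ C, δ ≤ y j) (hs : ∑ j, q j * y j ≤ δ) (j : Fin n) (hj : y j ≠ δ) :
    q j = 0 := by
  have hnn : ∀ k ∈ Finset.univ, 0 ≤ q k * (y k - δ) := by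
    intro k _
    by_cases hk : k ∈ C
    · exact mul_nonneg (h0 k) (by linarith [hy k hk])
    · simp [hC k hk]
  have hsum : ∑ k, q k * (y k - δ) = 0 := by
    refine le_antisymm ?_ (Finset.sum_nonneg hnn)
    simp only [mul_sub, Finset.sum_sub_distrib, ← Finset.sum_mul, h1]
    linarith
  have := (Finset.sum_eq_zero_iff_of_nonneg hnn).1 hsum j (Finset.mem_univ j)
  rcases mul_eq_zero.1 this with h | h
  · exact h
  · exact absurd (by linarith) hj

lemma step_down {n : ℕ} (g g' : (Fin n → ℝ) → (Fin n → ℝ)) (v v' : Fin n → ℝ)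
    (Q : Fin n → Fin n → ℝ) (C : Finset (Fin n)) (hCne : C.Nonempty)
    (hC : ClosedClass g' v' Q C) (hvv : v' ≤ v) (hgv : g' v ≤ v)
    (hcons : ∀ i, g' v i = v i → ∀ x, g' x i = g x i)
    (hlim : Tendsto (fun m : ℕ => g'^[m] v) atTop (𝓝 v')) :
    ∃ C' ⊆ C, C'.Nonempty ∧ (∀ i ∈ C', v i = v' i) ∧ ClosedClass g v Q C' := by
  classical
  obtain ⟨i0, hi0, hmin⟩ := Finset.exists_min_image C (fun i => v i - v' i) hCne
  set δ := v i0 - v' i0 with hδ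
  set C' := C.filter (fun i => v i - v' i = δ) with hC'
  have hi0' : i0 ∈ C' := by simp [hC', hi0, hδ]
  have hmem : ∀ i, i ∈ C' → i ∈ C ∧ v i - v' i = δ := fun i hi => by simpa [hC'] using hi
  -- closedness of `C'`
  have hclosed : ∀ i ∈ C', g' v i = v i ∧ ∀ j, j ∉ C' → Q i j = 0 := by
    intro i hi
    obtain ⟨hiC, hid⟩ := hmem i hi
    obtain ⟨h0, h1, h2, h3⟩ := hC i hiC
    have h4 := stoch_lower (Q i) C h0 h1 h2 (fun j => v j - v' j) δ hmin
    have h5 := h3 v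
    have h6 := hgv i
    refine ⟨by linarith, ?_⟩
    intro j hj
    by_cases hjC : j ∈ C
    · refine stoch_lower_eq (Q i) C h0 h1 h2 (fun j => v j - v' j) δ hmin (by linarith) j ?_
      intro h
      exact hj (by simp [hC', hjC, h])
    · exact h2 j hjC
  have hiter : ∀ m : ℕ, ∀ i ∈ C', v' i + δ ≤ (g'^[m] v) i := by
    intro m
    induction m with
    | zero => intro i hi; have := (hmem i hi).2; simp; linarith
    | succ m ih =>
      intro i hi
      obtain ⟨h0, h1, h2, h3⟩ := hC i (hmem i hi).1
      rw [Function.iterate_succ_apply']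
      have h4 := stoch_lower (Q i) C' h0 h1 (hclosed i hi).2
        (fun j => (g'^[m] v) j - v' j) δ (fun j hj => by linarith [ih j hj])
      have h5 := h3 (g'^[m] v)
      linarith
  have hδ0 : δ = 0 := by
    have h1 : v' i0 + δ ≤ v' i0 :=
      ge_of_tendsto' ((tendsto_pi_nhds.1 hlim) i0) (fun m => hiter m i0 hi0')
    have h2 := hvv i0
    linarith
  refine ⟨C', Finset.filter_subset _ _, ⟨i0, hi0'⟩, ?_, ?_⟩
  · intro i hi; linarith [(hmem i hi).2]
  · intro i hi
    obtain ⟨h0, h1, h2, h3⟩ := hC i (hmem i hi).1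
    refine ⟨h0, h1, (hclosed i hi).2, fun x => ?_⟩
    rw [← hcons i (hclosed i hi).1 x]
    refine le_trans (le_of_eq ?_) (h3 x)
    congr 1
    · linarith [(hmem i hi).2]
    · refine Finset.sum_congr rfl fun j _ => ?_
      by_cases hj : j ∈ C'
      · have := (hmem j hj).2
        have : v j = v' j := by linarith
        rw [this]
      · simp [(hclosed i hi).2 j hj]

lemma core {n : ℕ} (N : ℕ) (g : ℕ → (Fin n → ℝ) → (Fin n → ℝ)) (v : ℕ → Fin n → ℝ)
    (hmono : ∀ x y : Fin n → ℝ, x ≤ y → g N x ≤ g N y)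
    (hah : ∀ (lam : ℝ) (x : Fin n → ℝ) i, g N (fun j => lam + x j) i = lam + g N x i)
    (hconv : ∀ i, ConvexOn ℝ Set.univ (fun x => g N x i))
    (hfix0 : g N (v 0) = v 0) (hfixN : g N (v N) = v N)
    (hle : ∀ k < N, v (k + 1) ≤ v k)
    (hgv : ∀ k < N, g (k + 1) (v k) ≤ v k)
    (hcons : ∀ k < N, ∀ i, g (k + 1) (v k) i = v k i → ∀ x, g (k + 1) x i = g k x i)
    (hlim : ∀ k < N, Tendsto (fun m : ℕ => (g (k + 1))^[m] (v k)) atTop (𝓝 (v (k + 1)))) :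
    v 0 ≤ v N := by
  classical
  by_contra hcon
  have hcon' : ∃ i, v N i < v 0 i := by
    simpa [Pi.le_def] using hcon
  obtain ⟨i1, hi1⟩ := hcon'
  obtain ⟨i0, -, hmax⟩ := Finset.exists_max_image Finset.univ (fun i => v 0 i - v N i)
    ⟨i1, Finset.mem_univ _⟩
  set D := v 0 i0 - v N i0 with hD
  have hDpos : 0 < D := by have := hmax i1 (Finset.mem_univ _); linarith
  have hex : ∀ i, _ := fun i => exists_stoch_subgrad (fun x => g N x i)
    (fun x y h => hmono x y h i) (fun lam x => hah lam x i) (hconv i) (v 0)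
  choose Q hQ0 hQ1 hQ using hex
  set M := Finset.univ.filter (fun i => v 0 i - v N i = D) with hM
  have hmem : ∀ i, i ∈ M ↔ v 0 i - v N i = D := fun i => by simp [hM]
  have hMcl : ∀ i ∈ M, ∀ j, j ∉ M → Q i j = 0 := by
    intro i hi j hj
    have h1 := hQ i (v N)
    simp only [hfix0, hfixN] at h1
    refine stoch_lower_eq (Q i) Finset.univ (hQ0 i) (hQ1 i) (by simp)
      (fun j => v N j - v 0 j) (-D) (fun j hj => by linarith [hmax j hj])
      (by linarith [(hmem i).1 hi]) j ?_
    intro h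
    exact hj ((hmem j).2 (by linarith))
  have hMC : ClosedClass (g N) (v N) Q M := by
    intro i hi
    refine ⟨hQ0 i, hQ1 i, hMcl i hi, fun x => ?_⟩
    refine le_trans (le_of_eq ?_) (hQ i x)
    simp only [hfix0]
    have : ∑ j, Q i j * (x j - v N j) = ∑ j, (Q i j * (x j - v 0 j) + Q i j * D) := by
      refine Finset.sum_congr rfl fun j _ => ?_
      by_cases hj : j ∈ M
      · have := (hmem j).1 hj
        rw [← this]; ring
      · simp [hMcl i hi j hj]
    rw [this, Finset.sum_add_distrib, ← Finset.sum_mul, hQ1]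
    linarith [(hmem i).1 hi]
  have key : ∀ k, k ≤ N → ∃ C ⊆ M, C.Nonempty ∧ (∀ i ∈ C, v (N - k) i = v N i) ∧
      ClosedClass (g (N - k)) (v (N - k)) Q C := by
    intro k
    induction k with
    | zero =>
      intro _
      exact ⟨M, subset_rfl, ⟨i0, (hmem i0).2 rfl⟩, by simp, hMC⟩
    | succ k ih =>
      intro hk
      obtain ⟨C, hCM, hCne, hCv, hCC⟩ := ih (by omega)
      have e : N - k = (N - (k + 1)) + 1 := by omega
      have hlt : N - (k + 1) < N := by omega
      rw [e] at hCv hCC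
      obtain ⟨C', hC'C, hC'ne, hC'v, hC'C'⟩ := step_down (g (N - (k + 1)))
        (g (N - (k + 1) + 1)) (v (N - (k + 1))) (v (N - (k + 1) + 1)) Q C hCne hCC
        (hle _ hlt) (hgv _ hlt) (hcons _ hlt) (hlim _ hlt)
      exact ⟨C', hC'C.trans hCM, hC'ne,
        fun i hi => (hC'v i hi).trans (hCv i (hC'C hi)), hC'C'⟩
  obtain ⟨C, hCM, ⟨i, hi⟩, hCv, -⟩ := key N le_rfl
  have h1 := (hmem i).1 (hCM hi)
  have h2 := hCv i hi
  rw [Nat.sub_self] at h2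
  linarith

/-- Comparison of the slopes of a super- and a sub-invariant half-line. -/
lemma slope_le {n : ℕ} (g : (Fin n → ℝ) → (Fin n → ℝ))
    (hmono : ∀ x y : Fin n → ℝ, x ≤ y → g x ≤ g y)
    (hah : ∀ (lam : ℝ) (x : Fin n → ℝ) i, g (fun j => lam + x j) i = lam + g x i)
    (η v η' v' : Fin n → ℝ)
    (h : ∃ T : ℝ, ∀ t ≥ T, ∀ i, g (fun j => t * η j + v j) i ≤ (t + 1) * η i + v i)
    (h' : ∃ T : ℝ, ∀ t ≥ T, ∀ i, (t + 1) * η' i + v' i ≤ g (fun j => t * η' j + v' j) i) :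
    η' ≤ η := by
  obtain ⟨T1, h1⟩ := h
  obtain ⟨T2, h2⟩ := h'
  set T := max T1 T2
  have hT1 : T1 ≤ T := le_max_left _ _
  have hT2 : T2 ≤ T := le_max_right _ _
  obtain ⟨c, hc⟩ : ∃ c : ℝ, ∀ i, (T * η' i + v' i) - (T * η i + v i) ≤ c := by
    obtain ⟨c, hc⟩ := (Set.finite_range
      (fun i => (T * η' i + v' i) - (T * η i + v i))).bddAbove
    exact ⟨c, fun i => hc ⟨i, rfl⟩⟩
  have hind : ∀ m : ℕ, ∀ i, (T + m) * η' i + v' i ≤ c + ((T + m) * η i + v i) := by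
    intro m
    induction m with
    | zero => intro i; have := hc i; simp; linarith
    | succ m ih =>
      intro i
      have hm : (0 : ℝ) ≤ m := Nat.cast_nonneg m
      have a1 := h1 (T + m) (by linarith) i
      have a2 := h2 (T + m) (by linarith) i
      have a3 := hmono _ _ (show (fun j => (T + m) * η' j + v' j) ≤
        (fun j => c + ((T + m) * η j + v j)) from ih) i
      rw [hah c (fun j => (T + m) * η j + v j) i] at a3
      push_cast
      rw [← add_assoc]
      linarith
  intro i
  by_contra hlt
  push Not at hlt
  have hpos : 0 < η' i - η i := by linarith
  obtain ⟨m, hm⟩ := exists_nat_gt ((c + ((T * η i + v i) - (T * η' i + v' i))) / (η' i - η i))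
  rw [div_lt_iff₀ hpos] at hm
  have := hind m i
  nlinarith

/-- A convex function of `t` which is eventually nonpositive and tends to `0` eventually
vanishes. -/
lemma convex_eventually_zero (φ : ℝ → ℝ)
    (hconv : ∀ a b : ℝ, φ ((a + b) / 2) ≤ (φ a + φ b) / 2)
    (T : ℝ) (hT : ∀ t ≥ T, φ t ≤ 0) (hlim : Tendsto φ atTop (𝓝 0)) :
    ∀ t ≥ T, φ t = 0 := by
  intro t0 ht0
  refine le_antisymm (hT t0 ht0) ?_
  have h : ∀ᶠ s in atTop, φ s ≤ φ t0 / 2 := by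
    filter_upwards [eventually_ge_atTop t0] with s hs
    have h1 := hconv t0 (2 * s - t0)
    have h2 := hT (2 * s - t0) (by linarith)
    have e : (t0 + (2 * s - t0)) / 2 = s := by ring
    rw [e] at h1
    linarith
  have := le_of_tendsto hlim h
  linarith

/-- Setting of the policy iteration algorithm for multichain mean
payoff games: `f_i(x) = min_{a ∈ A i} f^a_i(x)` with each `f^a_i` polyhedral,
order-preserving, additively homogeneous and convex; strategies `σ_0, …, σ_K` and
half-lines `w^{(k)}(t) = t η^{(k)} + v^{(k)}` satisfying conditions (a)–(e) of the
algorithm.  Then no strategy is selected twice (`σ_s ≠ σ_m` for `s < m ≤ K`); in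
particular `K < ∏ i |A i|`, so the algorithm terminates after finitely many iterations. -/
theorem policy_iteration_terminates
    (n : ℕ) (A : Fin n → Type) [∀ i, Fintype (A i)] [∀ i, Nonempty (A i)]
    (fa : ∀ i : Fin n, A i → (Fin n → ℝ) → ℝ)
    (hpoly : ∀ i a, IsPolyhedralFun (fa i a))
    (hop : ∀ i a, ∀ x y : Fin n → ℝ, x ≤ y → fa i a x ≤ fa i a y)
    (hah : ∀ i a (lam : ℝ) (x : Fin n → ℝ), fa i a (fun j => lam + x j) = lam + fa i a x)
    (hconv : ∀ i a, ConvexOn ℝ Set.univ (fa i a))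
    (K : ℕ) (σ : ℕ → ∀ i : Fin n, A i) (η v : ℕ → Fin n → ℝ)
    -- (a) each `w^{(k)}` is an invariant half-line of `f^{(σ_k)}`
    (ha : ∀ k ≤ K, ∃ T : ℝ, ∀ t ≥ T, ∀ i : Fin n,
      fa i (σ k i) (fun j => t * η k j + v k j) = (t + 1) * η k i + v k i)
    -- (b) for `k < K`, `w^{(k)}` is not an invariant half-line of `f`
    (hb : ∀ k < K, ¬ ∃ T : ℝ, ∀ t ≥ T, ∀ i : Fin n,
      (⨅ a : A i, fa i a (fun j => t * η k j + v k j)) = (t + 1) * η k i + v k i)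
    -- (c) `f^{(σ_{k+1})}(w^{(k)}(t)) = f(w^{(k)}(t))` for all sufficiently large `t`
    (hc : ∀ k < K, ∃ T : ℝ, ∀ t ≥ T, ∀ i : Fin n,
      fa i (σ (k + 1) i) (fun j => t * η k j + v k j)
        = ⨅ a : A i, fa i a (fun j => t * η k j + v k j))
    -- (d) the improvement is conservative
    (hd : ∀ k < K, ∀ i : Fin n,
      (∃ T : ℝ, ∀ t ≥ T,
        (⨅ a : A i, fa i a (fun j => t * η k j + v k j))
          = fa i (σ k i) (fun j => t * η k j + v k j)) →
      σ (k + 1) i = σ k i)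
    -- (e) at degenerate iterations, `v^{(k+1)}` is the nonlinear spectral projection
    -- `lim_{m→∞} ḡ^m(v^{(k)})`, where `ḡ(y) = lim_{t→∞} (f^{(σ_{k+1})}(tη^{(k+1)}+y)
    -- − (t+1)η^{(k+1)})`
    (he : ∀ k < K, η (k + 1) = η k →
      ∃ gbar : (Fin n → ℝ) → (Fin n → ℝ),
        (∀ y : Fin n → ℝ,
          Tendsto (fun t : ℝ => fun i : Fin n =>
              fa i (σ (k + 1) i) (fun j => t * η (k + 1) j + y j)
                - (t + 1) * η (k + 1) i)
            atTop (𝓝 (gbar y))) ∧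
        Tendsto (fun m : ℕ => gbar^[m] (v k)) atTop (𝓝 (v (k + 1)))) :
    (∀ s m : ℕ, s < m → m ≤ K → σ s ≠ σ m) ∧
    K < ∏ i : Fin n, Fintype.card (A i) := by
  have hinf : ∀ i (a : A i) x, (⨅ a : A i, fa i a x) ≤ fa i a x := fun i a x =>
    ciInf_le (Set.finite_range fun a => fa i a x).bddBelow a
  have hsup : ∀ k < K, ∃ T : ℝ, ∀ t ≥ T, ∀ i : Fin n,
      fa i (σ (k + 1) i) (fun j => t * η k j + v k j) ≤ (t + 1) * η k i + v k i := by
    intro k hk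
    obtain ⟨T1, h1⟩ := ha k hk.le
    obtain ⟨T2, h2⟩ := hc k hk
    refine ⟨max T1 T2, fun t ht i => ?_⟩
    rw [h2 t (le_trans (le_max_right _ _) ht) i, ← h1 t (le_trans (le_max_left _ _) ht) i]
    exact hinf _ _ _
  have hηstep : ∀ k < K, η (k + 1) ≤ η k := by
    intro k hk
    refine slope_le (fun x i => fa i (σ (k + 1) i) x) (fun x y h i => hop _ _ x y h)
      (fun lam x i => hah _ _ lam x) (η k) (v k) (η (k + 1)) (v (k + 1)) (hsup k hk) ?_
    obtain ⟨T, hT⟩ := ha (k + 1) hk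
    exact ⟨T, fun t ht i => (hT t ht i).ge⟩
  have hηanti : ∀ a b, a ≤ b → b ≤ K → η b ≤ η a := by
    intro a b hab
    induction b, hab using Nat.le_induction with
    | base => intro _; exact le_rfl
    | succ b hab ih => intro hb; exact (hηstep b hb).trans (ih (by omega))
  have hne : ∀ s m : ℕ, s < m → m ≤ K → σ s ≠ σ m := by
    intro s m hsm hmK hσ
    have hηm : η s ≤ η m := by
      refine slope_le (fun x i => fa i (σ m i) x) (fun x y h i => hop _ _ x y h)
        (fun lam x i => hah _ _ lam x) (η m) (v m) (η s) (v s) ?_ ?_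
      · obtain ⟨T, hT⟩ := ha m hmK
        exact ⟨T, fun t ht i => (hT t ht i).le⟩
      · obtain ⟨T, hT⟩ := ha s (by omega)
        rw [← hσ]
        exact ⟨T, fun t ht i => (hT t ht i).ge⟩
    have hηc : ∀ k, s ≤ k → k ≤ m → η k = η s := fun k h1 h2 =>
      le_antisymm (hηanti s k h1 (h2.trans hmK)) (hηm.trans (hηanti k m h2 hmK))
    have hG : ∀ k, ∃ G : (Fin n → ℝ) → (Fin n → ℝ), s + k < m →
        (∀ y : Fin n → ℝ, Tendsto (fun t : ℝ => fun i : Fin n =>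
              fa i (σ (s + k + 1) i) (fun j => t * η s j + y j) - (t + 1) * η s i)
            atTop (𝓝 (G y))) ∧
        Tendsto (fun l : ℕ => G^[l] (v (s + k))) atTop (𝓝 (v (s + k + 1))) := by
      intro k
      by_cases hk : s + k < m
      · obtain ⟨G, h1, h2⟩ := he (s + k) (by omega)
          ((hηc _ (by omega) (by omega)).trans (hηc _ (by omega) (by omega)).symm)
        rw [hηc (s + k + 1) (by omega) (by omega)] at h1
        exact ⟨G, fun _ => ⟨h1, h2⟩⟩
      · exact ⟨fun x => x, fun h => absurd h hk⟩
    choose G hG using hG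
    obtain ⟨N, rfl⟩ : ∃ N, m = s + (N + 1) := ⟨m - s - 1, by omega⟩
    set g : ℕ → (Fin n → ℝ) → (Fin n → ℝ) := fun k => Nat.casesOn k (G N) G with hg
    have hgs : ∀ k, g (k + 1) = G k := fun k => rfl
    have hg0 : g 0 = G N := rfl
    have hbar : ∀ k ≤ N + 1, ∀ y i, Tendsto (fun t : ℝ =>
        fa i (σ (s + k) i) (fun j => t * η s j + y j) - (t + 1) * η s i)
            atTop (𝓝 (g k y i)) := by
      intro k hk y i
      cases k with
      | zero =>
        have h := tendsto_pi_nhds.1 ((hG N (by omega)).1 y) i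
        rw [hg0]
        have e : σ (s + N + 1) = σ (s + 0) := hσ.symm
        rw [e] at h
        exact h
      | succ k => exact tendsto_pi_nhds.1 ((hG k (by omega)).1 y) i
    have hmono : ∀ k ≤ N + 1, ∀ x y : Fin n → ℝ, x ≤ y → g k x ≤ g k y := by
      intro k hk x y hxy i
      refine le_of_tendsto_of_tendsto' (hbar k hk x i) (hbar k hk y i) fun t => ?_
      refine sub_le_sub_right (hop _ _ _ _ fun j => ?_) _
      have := hxy j
      simpa using this
    have hfix : ∀ k ≤ N + 1, g k (v (s + k)) = v (s + k) := by
      intro k hk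
      ext i
      refine tendsto_nhds_unique (hbar k hk _ i) ?_
      obtain ⟨T, hT⟩ := ha (s + k) (by omega)
      refine tendsto_const_nhds.congr' ?_
      filter_upwards [eventually_ge_atTop T] with t ht
      have := hT t ht i
      rw [hηc (s + k) (by omega) (by omega)] at this
      rw [this]; ring
    have hgv : ∀ k < N + 1, g (k + 1) (v (s + k)) ≤ v (s + k) := by
      intro k hk i
      refine le_of_tendsto (hbar (k + 1) hk _ i) ?_
      obtain ⟨T, hT⟩ := hsup (s + k) (by omega)
      filter_upwards [eventually_ge_atTop T] with t ht
      have := hT t ht i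
      rw [hηc (s + k) (by omega) (by omega)] at this
      rw [← add_assoc]
      linarith
    have hlim : ∀ k < N + 1, Tendsto (fun l : ℕ => (g (k + 1))^[l] (v (s + k))) atTop
        (𝓝 (v (s + (k + 1)))) := fun k hk => (hG k (by omega)).2
    have hle : ∀ k < N + 1, v (s + (k + 1)) ≤ v (s + k) := by
      intro k hk
      refine le_of_tendsto' (hlim k hk) fun l => ?_
      induction l with
      | zero => exact le_rfl
      | succ l ih =>
        rw [Function.iterate_succ_apply']
        exact (hmono _ hk _ _ ih).trans (hgv k hk)
    have hcons : ∀ k < N + 1, ∀ i, g (k + 1) (v (s + k)) i = v (s + k) i →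
        ∀ x, g (k + 1) x i = g k x i := by
      intro k hk i hi x
      have hσk : σ (s + k + 1) i = σ (s + k) i := by
        refine hd (s + k) (by omega) i ?_
        obtain ⟨T1, h1⟩ := hsup (s + k) (by omega)
        obtain ⟨T2, h2⟩ := ha (s + k) (by omega)
        obtain ⟨T3, h3⟩ := hc (s + k) (by omega)
        have hz := convex_eventually_zero (fun t =>
          fa i (σ (s + k + 1) i) (fun j => t * η (s + k) j + v (s + k) j)
            - (t + 1) * η (s + k) i - v (s + k) i) ?_ T1 ?_ ?_
        · refine ⟨max T1 (max T2 T3), fun t ht => ?_⟩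
          have ht1 : t ≥ T1 := le_trans (le_max_left _ _) ht
          have ht2 : t ≥ T2 := le_trans (le_trans (le_max_left _ _) (le_max_right _ _)) ht
          have ht3 : t ≥ T3 := le_trans (le_trans (le_max_right _ _) (le_max_right _ _)) ht
          have hz' := hz t ht1
          rw [← h3 t ht3 i, h2 t ht2 i]
          linarith
        · intro a b
          have hcv := (hconv i (σ (s + k + 1) i)).2
            (Set.mem_univ (fun j => a * η (s + k) j + v (s + k) j))
            (Set.mem_univ (fun j => b * η (s + k) j + v (s + k) j))
            (show (0 : ℝ) ≤ 1 / 2 by norm_num) (show (0 : ℝ) ≤ 1 / 2 by norm_num) (by norm_num)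
          have e : ((1 / 2 : ℝ) • (fun j => a * η (s + k) j + v (s + k) j) +
              (1 / 2 : ℝ) • (fun j => b * η (s + k) j + v (s + k) j)) =
              (fun j => (a + b) / 2 * η (s + k) j + v (s + k) j) := by
            ext j
            simp only [Pi.add_apply, Pi.smul_apply, smul_eq_mul]
            ring
          rw [e] at hcv
          simp only [smul_eq_mul] at hcv
          linarith
        · intro t ht
          have := h1 t ht i
          linarith
        · have h := (hbar (k + 1) hk (v (s + k)) i).sub_const (v (s + k) i)
          rw [hi, sub_self] at h
          rw [hηc (s + k) (by omega) (by omega)]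
          exact h
      have h1 := hbar (k + 1) hk x i
      have e : σ (s + (k + 1)) i = σ (s + k) i := hσk
      rw [e] at h1
      exact tendsto_nhds_unique h1 (hbar k hk.le x i)
    have hfin : v (s + 0) ≤ v (s + (N + 1)) := by
      refine core (N + 1) g (fun k => v (s + k)) (hmono _ le_rfl) ?_ ?_ ?_ (hfix _ le_rfl)
        hle hgv hcons hlim
      · intro lam x i
        refine tendsto_nhds_unique (hbar (N + 1) le_rfl _ i) ?_
        refine ((hbar (N + 1) le_rfl x i).const_add lam).congr fun t => ?_
        have := hah i (σ (s + (N + 1)) i) lam (fun j => t * η s j + x j)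
        have e : (fun j => t * η s j + (lam + x j)) = fun j => lam + (t * η s j + x j) := by
          ext j; ring
        rw [e, this]; ring
      · intro i
        refine ⟨convex_univ, fun x _ y _ a b ha0 hb0 hab => ?_⟩
        have h1 := (hbar (N + 1) le_rfl x i).const_mul a
        have h2 := (hbar (N + 1) le_rfl y i).const_mul b
        refine le_of_tendsto_of_tendsto' (hbar (N + 1) le_rfl (a • x + b • y) i)
          (h1.add h2) fun t => ?_
        have hcv := (hconv i (σ (s + (N + 1)) i)).2
            (Set.mem_univ (fun j => t * η s j + x j))
            (Set.mem_univ (fun j => t * η s j + y j)) ha0 hb0 hab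
        have e : (a • (fun j => t * η s j + x j) + b • (fun j => t * η s j + y j)) =
            fun j => t * η s j + (a • x + b • y) j := by
          ext j
          simp only [Pi.add_apply, Pi.smul_apply, smul_eq_mul]
          linear_combination (t * η s j) * hab
        rw [e] at hcv
        simp only [smul_eq_mul] at hcv
        have e2 : (t + 1) * η s i = a * ((t + 1) * η s i) + b * ((t + 1) * η s i) := by
          linear_combination -((t + 1) * η s i) * hab
        linarith
      · have e := hfix 0 (by omega)
        have e2 : g (N + 1) = g 0 := rfl
        rw [e2]
        exact e
    have hvanti : ∀ k, k ≤ N → v (s + (k + 1)) ≤ v (s + 1) := by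
      intro k
      induction k with
      | zero => intro _; exact le_rfl
      | succ k ih => intro hk; exact (hle (k + 1) (by omega)).trans (ih (by omega))
    have hv1 : v (s + 1) = v s :=
      le_antisymm (hle 0 (by omega)) (hfin.trans (hvanti N le_rfl))
    have hη1 : η (s + 1) = η s := hηc _ (by omega) (by omega)
    refine hb s (by omega) ?_
    obtain ⟨T1, h1⟩ := hc s (by omega)
    obtain ⟨T2, h2⟩ := ha (s + 1) (by omega)
    refine ⟨max T1 T2, fun t ht i => ?_⟩
    have h2' := h2 t (le_trans (le_max_right _ _) ht) i
    rw [hη1, hv1] at h2'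
    rw [← h1 t (le_trans (le_max_left _ _) ht) i, h2']
  refine ⟨hne, ?_⟩
  classical
  have hinj : Function.Injective (fun k : Fin (K + 1) => σ k) := by
    intro a b hab
    by_contra hab'
    have hv : (a : ℕ) ≠ b := fun h => hab' (Fin.ext h)
    rcases lt_or_gt_of_ne hv with h | h
    · exact hne a b h (by omega) hab
    · exact hne b a h (by omega) hab.symm
  have := Fintype.card_le_of_injective _ hinj
  rw [Fintype.card_fin, Fintype.card_pi] at this
  omega
end

section
/- Let P be an n×n stochastic matrix, r ∈ ℝⁿ, and S ⊆ {1,…,n} a set containing exactly one index from each final class of P. Then there exists a unique pair (η, v) ∈ ℝⁿ × ℝⁿ such that η_i = (Pη)_i for all i ∉ S, η_i + v_i = (Pv)_i + r_i for all i ∈ {1,…,n}, and v_i = 0 for all i ∈ S. Moreover this η satisfies η = Pη. -/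
open Filter Topology

/-- An `n×n` real matrix is (row-)stochastic if it has nonnegative entries and every row
sums to `1`. -/
def IsStochastic {n : ℕ} (P : Matrix (Fin n) (Fin n) ℝ) : Prop :=
  (∀ i j, 0 ≤ P i j) ∧ ∀ i, ∑ j, P i j = 1

/-- `F` is a final class of `P`: a strongly connected component of the digraph on
`{1,…,n}` with an arc `(i,j)` whenever `P i j > 0`, such that no arc leaves `F`. -/
def IsFinalClass {n : ℕ} (P : Matrix (Fin n) (Fin n) ℝ) (F : Finset (Fin n)) : Prop :=
  F.Nonempty ∧
  (∀ i ∈ F, ∀ j ∈ F, Relation.ReflTransGen (fun a b => 0 < P a b) i j) ∧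
  (∀ i ∈ F, ∀ j, 0 < P i j → j ∈ F)

lemma ms_avg {n : ℕ} {P : Matrix (Fin n) (Fin n) ℝ} (hP : IsStochastic P) (f : Fin n → ℝ)
    (a : Fin n) (h : f a ≤ P.mulVec f a) (hle : ∀ j, 0 < P a j → f j ≤ f a) (b : Fin n)
    (hb : 0 < P a b) : f b = f a := by
  have hn : ∀ j ∈ Finset.univ, 0 ≤ P a j * (f a - f j) := by
    intro j _
    rcases (hP.1 a j).eq_or_lt with h0 | h0
    · rw [← h0]; simp
    · exact mul_nonneg h0.le (sub_nonneg.2 (hle j h0))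
  have hs : ∑ j, P a j * (f a - f j) = f a - P.mulVec f a := by
    simp only [mul_sub, Finset.sum_sub_distrib, ← Finset.sum_mul, hP.2 a, one_mul]
    rfl
  have h0 : ∑ j, P a j * (f a - f j) = 0 :=
    le_antisymm (by rw [hs]; linarith) (Finset.sum_nonneg hn)
  have := (Finset.sum_eq_zero_iff_of_nonneg hn).1 h0 b (Finset.mem_univ b)
  rcases mul_eq_zero.1 this with h1 | h1
  · exact absurd h1 hb.ne'
  · linarith

lemma ms_le {n : ℕ} {P : Matrix (Fin n) (Fin n) ℝ} (hP : IsStochastic P) (S : Finset (Fin n))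
    (hR : ∀ i, ∃ s ∈ S, Relation.ReflTransGen (fun a b => 0 < P a b) i s)
    (C : Finset (Fin n)) (hC : ∀ i ∈ C, ∀ j, 0 < P i j → j ∈ C) (f : Fin n → ℝ)
    (hf : ∀ i ∈ C, i ∉ S → f i = P.mulVec f i) (c : ℝ) (hc : ∀ i ∈ C, i ∈ S → f i ≤ c) :
    ∀ i ∈ C, f i ≤ c := by
  intro i hi
  obtain ⟨m, hm, hmax⟩ := C.exists_max_image f ⟨i, hi⟩
  refine (hmax i hi).trans ?_
  obtain ⟨s, hs, hr⟩ := hR m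
  have key : ∀ a, Relation.ReflTransGen (fun a b => 0 < P a b) a s →
      a ∈ C → f a = f m → f m ≤ c := by
    intro a ha
    induction ha using Relation.ReflTransGen.head_induction_on with
    | refl => intro h1 h2; rw [← h2]; exact hc _ h1 hs
    | head hab hbs ih =>
      rename_i a b
      intro h1 h2
      by_cases haS : a ∈ S
      · rw [← h2]; exact hc _ h1 haS
      · refine ih (hC _ h1 _ hab) ?_
        rw [← h2]
        refine ms_avg hP f a (hf a h1 haS).le (fun j hj => ?_) b hab
        rw [h2]; exact hmax j (hC _ h1 _ hj)
  exact key m hr hm rfl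

lemma ms_eq {n : ℕ} {P : Matrix (Fin n) (Fin n) ℝ} (hP : IsStochastic P) (S : Finset (Fin n))
    (hR : ∀ i, ∃ s ∈ S, Relation.ReflTransGen (fun a b => 0 < P a b) i s)
    (C : Finset (Fin n)) (hC : ∀ i ∈ C, ∀ j, 0 < P i j → j ∈ C) (f : Fin n → ℝ)
    (hf : ∀ i ∈ C, i ∉ S → f i = P.mulVec f i) (c : ℝ) (hc : ∀ i ∈ C, i ∈ S → f i = c) :
    ∀ i ∈ C, f i = c := by
  intro i hi
  refine le_antisymm (ms_le hP S hR C hC f hf c (fun i h h' => (hc i h h').le) i hi) ?_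
  have := ms_le hP S hR C hC (-f) (fun i h h' => by
    rw [Matrix.mulVec_neg, Pi.neg_apply, Pi.neg_apply, hf i h h']) (-c)
    (fun i h h' => by simp [hc i h h']) i hi
  simpa using this

lemma ms_reach {n : ℕ} {P : Matrix (Fin n) (Fin n) ℝ} (S : Finset (Fin n))
    (hS2 : ∀ F : Finset (Fin n), IsFinalClass P F → ∃! i : Fin n, i ∈ S ∧ i ∈ F) (i : Fin n) :
    ∃ s ∈ S, Relation.ReflTransGen (fun a b => 0 < P a b) i s := by
  classical
  let R : Fin n → Finset (Fin n) := fun i =>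
    Finset.univ.filter (fun j => Relation.ReflTransGen (fun a b => 0 < P a b) i j)
  have hmem : ∀ a b, b ∈ R a ↔ Relation.ReflTransGen (fun a b => 0 < P a b) a b := by
    intro a b; simp [R]
  obtain ⟨m, hm, hmin⟩ := (R i).exists_min_image (fun j => (R j).card)
    ⟨i, (hmem _ _).2 .refl⟩
  rw [hmem] at hm
  have hF : IsFinalClass P (R m) := by
    refine ⟨⟨m, (hmem _ _).2 .refl⟩, ?_, ?_⟩
    · intro a ha b hb
      rw [hmem] at ha
      have hsub : R a ⊆ R m := fun x hx => (hmem _ _).2 (ha.trans ((hmem _ _).1 hx))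
      have := Finset.eq_of_subset_of_card_le hsub (hmin a ((hmem _ _).2 (hm.trans ha)))
      rw [← this] at hb
      exact (hmem _ _).1 hb
    · intro a ha b hb
      rw [hmem] at ha ⊢
      exact ha.tail hb
  obtain ⟨s, ⟨hs, hsm⟩, _⟩ := hS2 _ hF
  exact ⟨s, hs, hm.trans ((hmem _ _).1 hsm)⟩

lemma ms_congr {n : ℕ} {P : Matrix (Fin n) (Fin n) ℝ} (hP : IsStochastic P) (f : Fin n → ℝ)
    (i : Fin n) (c : ℝ) (h : ∀ j, 0 < P i j → f j = c) : P.mulVec f i = c := by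
  have : P.mulVec f i = ∑ j, P i j * c := by
    change ∑ j, P i j * f j = _
    refine Finset.sum_congr rfl (fun j _ => ?_)
    rcases (hP.1 i j).eq_or_lt with h0 | h0
    · rw [← h0]; simp
    · rw [h j h0]
  rw [this, ← Finset.sum_mul, hP.2, one_mul]

lemma ms_mono {n : ℕ} {P : Matrix (Fin n) (Fin n) ℝ} (hP : IsStochastic P) (f : Fin n → ℝ)
    (i : Fin n) (c : ℝ) (h : ∀ j, 0 < P i j → f j ≤ c) : P.mulVec f i ≤ c := by
  have : P.mulVec f i ≤ ∑ j, P i j * c := by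
    change ∑ j, P i j * f j ≤ _
    refine Finset.sum_le_sum (fun j _ => ?_)
    rcases (hP.1 i j).eq_or_lt with h0 | h0
    · rw [← h0]; simp
    · exact mul_le_mul_of_nonneg_left (h j h0) h0.le
  rwa [← Finset.sum_mul, hP.2, one_mul] at this

lemma ms_const_nonpos {n : ℕ} {P : Matrix (Fin n) (Fin n) ℝ} (hP : IsStochastic P)
    (F : Finset (Fin n)) (hF : IsFinalClass P F) (v : Fin n → ℝ) (c : ℝ)
    (h : ∀ i ∈ F, c + v i = P.mulVec v i) : c ≤ 0 := by
  obtain ⟨m, hm, hmax⟩ := F.exists_max_image v hF.1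
  have h1 := h m hm
  have h2 := ms_mono hP v m (v m) (fun j hj => hmax j (hF.2.2 m hm j hj))
  linarith

/-- Let `P` be an `n×n` stochastic matrix, `r ∈ ℝⁿ`, and `S` a set
containing exactly one index from each final class of `P` (and nothing else).  Then there
is a unique pair `(η, v)` with `η_i = (Pη)_i` for `i ∉ S`, `η + v = Pv + r`, and `v_i = 0`
for `i ∈ S`; moreover this `η` satisfies `η = Pη`. -/
theorem multichain_evaluation_system_unique
    (n : ℕ) (P : Matrix (Fin n) (Fin n) ℝ) (hP : IsStochastic P)
    (r : Fin n → ℝ) (S : Finset (Fin n))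
    (hS1 : ∀ i ∈ S, ∃ F : Finset (Fin n), IsFinalClass P F ∧ i ∈ F)
    (hS2 : ∀ F : Finset (Fin n), IsFinalClass P F → ∃! i : Fin n, i ∈ S ∧ i ∈ F) :
    ∃ η v : Fin n → ℝ,
      ((∀ i ∉ S, η i = P.mulVec η i) ∧
       (∀ i : Fin n, η i + v i = P.mulVec v i + r i) ∧
       (∀ i ∈ S, v i = 0)) ∧
      (∀ η' v' : Fin n → ℝ,
        ((∀ i ∉ S, η' i = P.mulVec η' i) ∧
         (∀ i : Fin n, η' i + v' i = P.mulVec v' i + r i) ∧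
         (∀ i ∈ S, v' i = 0)) → η' = η ∧ v' = v) ∧
      P.mulVec η = η := by
  have hR := ms_reach S hS2
  -- on a final class, `η` is constant
  have hconst : ∀ η : Fin n → ℝ, (∀ i ∉ S, η i = P.mulVec η i) → ∀ s ∈ S,
      ∀ F : Finset (Fin n), IsFinalClass P F → s ∈ F → ∀ i ∈ F, η i = η s := by
    intro η h s hs F hF hsF
    refine ms_eq hP S hR F hF.2.2 η (fun i _ hi => h i hi) (η s) ?_
    intro i hi hiS
    rw [(hS2 F hF).unique ⟨hiS, hi⟩ ⟨hs, hsF⟩]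
  have hharm : ∀ η : Fin n → ℝ, (∀ i ∉ S, η i = P.mulVec η i) → P.mulVec η = η := by
    intro η h
    funext i
    by_cases hi : i ∈ S
    · obtain ⟨F, hF, hiF⟩ := hS1 i hi
      exact ms_congr hP η i (η i)
        (fun j hj => hconst η h i hi F hF hiF j (hF.2.2 i hiF j hj))
    · exact (h i hi).symm
  have hzero : ∀ η v : Fin n → ℝ, (∀ i ∉ S, η i = P.mulVec η i) →
      (∀ i, η i + v i = P.mulVec v i) → (∀ i ∈ S, v i = 0) → η = 0 ∧ v = 0 := by
    intro η v h1 h2 h3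
    have hηS : ∀ s ∈ S, η s = 0 := by
      intro s hs
      obtain ⟨F, hF, hsF⟩ := hS1 s hs
      have hc := hconst η h1 s hs F hF hsF
      refine le_antisymm (ms_const_nonpos hP F hF v (η s) ?_) ?_
      · intro i hi
        rw [← hc i hi]; exact h2 i
      · have := ms_const_nonpos hP F hF (-v) (-η s) (by
          intro i hi
          rw [Matrix.mulVec_neg, Pi.neg_apply, Pi.neg_apply, ← h2 i, hc i hi]; ring)
        linarith
    have hη : ∀ i, η i = 0 := fun i =>
      ms_eq hP S hR Finset.univ (fun _ _ _ _ => Finset.mem_univ _) η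
        (fun i _ hi => h1 i hi) 0 (fun i _ hi => hηS i hi) i (Finset.mem_univ _)
    have hv : ∀ i, v i = 0 := fun i =>
      ms_eq hP S hR Finset.univ (fun _ _ _ _ => Finset.mem_univ _) v
        (fun i _ _ => by rw [← h2 i, hη i, zero_add]) 0 (fun i _ hi => h3 i hi) i
        (Finset.mem_univ _)
    exact ⟨funext hη, funext hv⟩
  classical
  let T : ((Fin n → ℝ) × (Fin n → ℝ)) →ₗ[ℝ] ((Fin n → ℝ) × (Fin n → ℝ)) :=
    { toFun := fun p => (fun i => if i ∈ S then p.2 i else p.1 i - P.mulVec p.1 i,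
        fun i => p.1 i + p.2 i - P.mulVec p.2 i)
      map_add' := by
        intro p q
        ext i
        · by_cases hi : i ∈ S <;> simp [hi, Matrix.mulVec_add]
          ring
        · simp [Matrix.mulVec_add]
          ring
      map_smul' := by
        intro c p
        ext i
        · by_cases hi : i ∈ S <;> simp [hi, Matrix.mulVec_smul]
          ring
        · simp [Matrix.mulVec_smul]
          ring }
  have hT : Function.Injective T := by
    rw [← LinearMap.ker_eq_bot, LinearMap.ker_eq_bot']
    rintro ⟨η, v⟩ h
    have ha : ∀ i, (if i ∈ S then v i else η i - P.mulVec η i) = 0 := fun i =>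
      congrFun (congrArg Prod.fst h) i
    have hb : ∀ i, η i + v i - P.mulVec v i = 0 := fun i =>
      congrFun (congrArg Prod.snd h) i
    obtain ⟨h1, h2⟩ := hzero η v
      (fun i hi => by have := ha i; rw [if_neg hi] at this; linarith)
      (fun i => by linarith [hb i])
      (fun i hi => by have := ha i; rwa [if_pos hi] at this)
    rw [h1, h2]; rfl
  obtain ⟨⟨η, v⟩, h⟩ := (LinearMap.injective_iff_surjective.1 hT) (0, r)
  have ha : ∀ i, (if i ∈ S then v i else η i - P.mulVec η i) = 0 := fun i =>
    congrFun (congrArg Prod.fst h) i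
  have hb : ∀ i, η i + v i - P.mulVec v i = r i := fun i =>
    congrFun (congrArg Prod.snd h) i
  have e1 : ∀ i ∉ S, η i = P.mulVec η i := fun i hi => by
    have := ha i; rw [if_neg hi] at this; linarith
  have e2 : ∀ i : Fin n, η i + v i = P.mulVec v i + r i := fun i => by linarith [hb i]
  have e3 : ∀ i ∈ S, v i = 0 := fun i hi => by have := ha i; rwa [if_pos hi] at this
  refine ⟨η, v, ⟨e1, e2, e3⟩, ?_, hharm η e1⟩
  rintro η' v' ⟨f1, f2, f3⟩
  obtain ⟨h1, h2⟩ := hzero (η' - η) (v' - v)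
    (fun i hi => by
      rw [Matrix.mulVec_sub, Pi.sub_apply, Pi.sub_apply, ← e1 i hi, ← f1 i hi])
    (fun i => by
      rw [Matrix.mulVec_sub, Pi.sub_apply, Pi.sub_apply, Pi.sub_apply]
      linarith [e2 i, f2 i])
    (fun i hi => by rw [Pi.sub_apply, e3 i hi, f3 i hi, sub_zero])
  exact ⟨sub_eq_zero.1 h1, sub_eq_zero.1 h2⟩
end

section
/- Let P be an n×n stochastic matrix. Then the kernel of I − P (as a linear endomorphism of ℝⁿ, where I is the identity matrix) has dimension equal to the number of final classes of P; moreover, every w ∈ ker(I − P) that vanishes at (at least) one index in each final class of P is identically zero. -/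
open Filter Topology

theorem exists_finalClass_subset {n : ℕ} (P : Matrix (Fin n) (Fin n) ℝ) (S : Finset (Fin n))
    (hS : S.Nonempty) (hc : ∀ i ∈ S, ∀ j, 0 < P i j → j ∈ S) :
    ∃ F ⊆ S, IsFinalClass P F := by
  classical
  induction hk : S.card using Nat.strong_induction_on generalizing S with
  | _ k ih =>
    by_cases h : ∃ i ∈ S, ∃ j ∈ S, ¬ Relation.ReflTransGen (fun a b => 0 < P a b) i j
    · obtain ⟨i, hi, j, hj, hij⟩ := h
      let T := S.filter (fun l => Relation.ReflTransGen (fun a b => 0 < P a b) i l)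
      have hTS : T ⊂ S := by
        refine Finset.filter_ssubset.2 ⟨j, hj, hij⟩
      obtain ⟨F, hF, hF'⟩ := ih T.card (hk ▸ Finset.card_lt_card hTS) T
        ⟨i, Finset.mem_filter.2 ⟨hi, .refl⟩⟩ (by
          intro a ha b hab
          have ha' := Finset.mem_filter.1 ha
          exact Finset.mem_filter.2 ⟨hc a ha'.1 b hab, ha'.2.tail hab⟩) rfl
      exact ⟨F, hF.trans hTS.1, hF'⟩
    · push Not at h
      exact ⟨S, subset_rfl, hS, h, hc⟩

theorem finalClass_mem_of_reach {n : ℕ} {P : Matrix (Fin n) (Fin n) ℝ} {F : Finset (Fin n)}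
    (hF : IsFinalClass P F) {i j : Fin n} (hi : i ∈ F)
    (h : Relation.ReflTransGen (fun a b => 0 < P a b) i j) : j ∈ F := by
  induction h with
  | refl => exact hi
  | tail _ hab ih => exact hF.2.2 _ ih _ hab

theorem finalClass_eq {n : ℕ} {P : Matrix (Fin n) (Fin n) ℝ} {F G : Finset (Fin n)}
    (hF : IsFinalClass P F) (hG : IsFinalClass P G) {i : Fin n} (hi : i ∈ F) (hi' : i ∈ G) :
    F = G := by
  ext j
  exact ⟨fun hj => finalClass_mem_of_reach hG hi' (hF.2.1 i hi j hj),
    fun hj => finalClass_mem_of_reach hF hi (hG.2.1 i hi' j hj)⟩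

theorem ker_iff {n : ℕ} (P : Matrix (Fin n) (Fin n) ℝ) (w : Fin n → ℝ) :
    (1 - P).mulVec w = 0 ↔ ∀ i, ∑ j, P i j * w j = w i := by
  rw [Matrix.sub_mulVec, Matrix.one_mulVec, sub_eq_zero, funext_iff]
  exact forall_congr' fun i => eq_comm

/-- The maximum principle. -/
theorem harmonic_nonpos {n : ℕ} {P : Matrix (Fin n) (Fin n) ℝ} (hP : IsStochastic P)
    (w : Fin n → ℝ) (hw : ∀ i, ∑ j, P i j * w j = w i)
    (h0 : ∀ F : Finset (Fin n), IsFinalClass P F → ∃ i ∈ F, w i = 0) (i : Fin n) : w i ≤ 0 := by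
  classical
  obtain ⟨m, -, hm⟩ := Finset.exists_max_image Finset.univ w ⟨i, Finset.mem_univ i⟩
  obtain ⟨F, hFS, hF⟩ := exists_finalClass_subset P (Finset.univ.filter (fun l => w l = w m))
    ⟨m, by simp⟩ (by
      intro a ha b hab
      simp only [Finset.mem_filter, Finset.mem_univ, true_and] at ha ⊢
      have hs : ∑ j, P a j * (w m - w j) = 0 := by
        simp only [mul_sub, Finset.sum_sub_distrib, ← Finset.sum_mul, hP.2 a, hw a, ha]
        ring
      have hz := (Finset.sum_eq_zero_iff_of_nonneg (fun j _ =>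
        mul_nonneg (hP.1 a j) (sub_nonneg.2 (hm j (Finset.mem_univ j))))).1 hs b
          (Finset.mem_univ b)
      rcases mul_eq_zero.1 hz with h | h
      · exact absurd h hab.ne'
      · linarith)
  obtain ⟨k, hk, hk0⟩ := h0 F hF
  have h1 := (Finset.mem_filter.1 (hFS hk)).2
  have h2 := hm i (Finset.mem_univ i)
  linarith

theorem harmonicVec_eq_zero {n : ℕ} {P : Matrix (Fin n) (Fin n) ℝ} (hP : IsStochastic P)
    (w : Fin n → ℝ) (hw : ∀ i, ∑ j, P i j * w j = w i)
    (h0 : ∀ F : Finset (Fin n), IsFinalClass P F → ∃ i ∈ F, w i = 0) : w = 0 := by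
  funext i
  have h1 := harmonic_nonpos hP w hw h0 i
  have h2 := harmonic_nonpos hP (-w) (by simpa using hw) (by simpa using h0) i
  simp only [Pi.neg_apply] at h2
  simp only [Pi.zero_apply]
  linarith

/-- If `w` is constant on a final class then it is harmonic there. -/
theorem harmonic_on_class {n : ℕ} {P : Matrix (Fin n) (Fin n) ℝ} (hP : IsStochastic P)
    {F : Finset (Fin n)} (hF : IsFinalClass P F) (w : Fin n → ℝ) (c : ℝ)
    (hw : ∀ i ∈ F, w i = c) (i : Fin n) (hi : i ∈ F) : ∑ j, P i j * w j = w i := by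
  have : ∀ j, P i j * w j = P i j * c := by
    intro j
    rcases (hP.1 i j).eq_or_lt with h | h
    · simp [← h]
    · rw [hw j (hF.2.2 i hi j h)]
  simp only [this, ← Finset.sum_mul, hP.2 i, hw i hi, one_mul]

theorem exists_harmonic {n : ℕ} {P : Matrix (Fin n) (Fin n) ℝ} (hP : IsStochastic P)
    (g : {F : Finset (Fin n) // IsFinalClass P F} → ℝ) :
    ∃ w : Fin n → ℝ, (∀ i, ∑ j, P i j * w j = w i) ∧
      ∀ F : {F : Finset (Fin n) // IsFinalClass P F}, ∀ i ∈ F.1, w i = g F := by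
  classical
  let R : Fin n → Prop := fun i => ∃ F : {F : Finset (Fin n) // IsFinalClass P F}, i ∈ F.1
  let T : (Fin n → ℝ) →ₗ[ℝ] (Fin n → ℝ) :=
    { toFun := fun w i => if R i then w i else w i - ∑ j, P i j * w j
      map_add' := by
        intro x y
        funext i
        by_cases h : R i
        · simp [h]
        · simp only [h, if_false, Pi.add_apply, mul_add, Finset.sum_add_distrib]
          ring
      map_smul' := by
        intro a x
        funext i
        by_cases h : R i
        · simp [h]
        · simp only [h, if_false, Pi.smul_apply, smul_eq_mul, RingHom.id_apply, mul_sub,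
            Finset.mul_sum]
          congr 1
          exact Finset.sum_congr rfl fun j _ => by ring }
  have hT : ∀ w i, T w i = if R i then w i else w i - ∑ j, P i j * w j := fun _ _ => rfl
  have hinj : Function.Injective T := by
    refine (injective_iff_map_eq_zero T).2 fun w hw => ?_
    have hR : ∀ i, R i → w i = 0 := by
      intro i hi
      have := congrFun hw i
      rwa [hT, if_pos hi] at this
    refine harmonicVec_eq_zero hP w (fun i => ?_) (fun F hF => ?_)
    · by_cases hi : R i
      · obtain ⟨F, hF⟩ := hi
        exact harmonic_on_class hP F.2 w 0 (fun j hj => hR j ⟨F, hj⟩) i hF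
      · have := congrFun hw i
        rw [hT, if_neg hi, Pi.zero_apply] at this
        linarith
    · obtain ⟨i, hi⟩ := hF.1
      exact ⟨i, hi, hR i ⟨⟨F, hF⟩, hi⟩⟩
  obtain ⟨w, hw⟩ := LinearMap.injective_iff_surjective.1 hinj
    (fun i => if h : R i then g h.choose else 0)
  have hg : ∀ F : {F : Finset (Fin n) // IsFinalClass P F}, ∀ i ∈ F.1, w i = g F := by
    intro F i hi
    have hRi : R i := ⟨F, hi⟩
    have := congrFun hw i
    rw [hT, if_pos hRi] at this
    simp only [hRi, dif_pos] at this
    rw [this]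
    congr 1
    exact Subtype.ext (finalClass_eq hRi.choose.2 F.2 hRi.choose_spec hi)
  refine ⟨w, fun i => ?_, hg⟩
  by_cases hi : R i
  · obtain ⟨F, hF⟩ := hi
    exact harmonic_on_class hP F.2 w (g F) (hg F) i hF
  · have := congrFun hw i
    rw [hT, if_neg hi] at this
    simp only [hi, dif_neg, not_false_eq_true] at this
    linarith

/-- Let `P` be an `n×n` stochastic matrix.  Then the kernel of `I − P`
has dimension equal to the number of final classes of `P`; moreover every
`w ∈ ker(I − P)` vanishing at (at least) one index in each final class is identically
zero. -/
theorem ker_one_sub_stochastic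
    (n : ℕ) (P : Matrix (Fin n) (Fin n) ℝ) (hP : IsStochastic P) :
    Module.finrank ℝ (LinearMap.ker (Matrix.mulVecLin (1 - P)))
        = Set.ncard {F : Finset (Fin n) | IsFinalClass P F} ∧
    ∀ w : Fin n → ℝ, (1 - P).mulVec w = 0 →
      (∀ F : Finset (Fin n), IsFinalClass P F → ∃ i ∈ F, w i = 0) → w = 0 := by
  classical
  have hz : ∀ w : Fin n → ℝ, (1 - P).mulVec w = 0 →
      (∀ F : Finset (Fin n), IsFinalClass P F → ∃ i ∈ F, w i = 0) → w = 0 :=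
    fun w hw h0 => harmonicVec_eq_zero hP w ((ker_iff P w).1 hw) h0
  refine ⟨?_, hz⟩
  let ev : (Fin n → ℝ) →ₗ[ℝ] ({F : Finset (Fin n) // IsFinalClass P F} → ℝ) :=
    LinearMap.funLeft ℝ ℝ (fun F => F.2.1.choose)
  have hev : ∀ w F, ev w F = w F.2.1.choose := fun _ _ => rfl
  let L := ev.comp (LinearMap.ker (Matrix.mulVecLin (1 - P))).subtype
  have hL : Function.Bijective L := by
    constructor
    · refine (injective_iff_map_eq_zero L).2 fun w hw => Subtype.ext ?_
      refine hz w.1 w.2 fun F hF => ⟨hF.1.choose, hF.1.choose_spec, ?_⟩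
      exact congrFun hw ⟨F, hF⟩
    · intro g
      obtain ⟨w, hw, hg⟩ := exists_harmonic hP g
      refine ⟨⟨w, (ker_iff P w).2 hw⟩, ?_⟩
      funext F
      exact hg F _ F.2.1.choose_spec
  rw [(LinearEquiv.ofBijective L hL).finrank_eq, Module.finrank_fintype_fun_eq_card,
    ← Nat.card_eq_fintype_card]
  rfl
end

section
/- Let P be an n×n stochastic matrix and r ∈ ℝⁿ. Then there exists a unique vector η ∈ ℝⁿ such that Pη = η and η − r belongs to the range of I − P; moreover, for each final class F of P, letting π_F be the unique stationary probability vector of the (stochastic, irreducible) F×F submatrix P_{FF}, one has η_i = Σ_{j∈F} (π_F)_j r_j for every i ∈ F. -/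
open Filter Topology

theorem stoch_abs_le {n : ℕ} {P : Matrix (Fin n) (Fin n) ℝ} (hP : IsStochastic P)
    {w : Fin n → ℝ} {C : ℝ} (hw : ∀ i, |w i| ≤ C) (i : Fin n) : |P.mulVec w i| ≤ C := by
  calc |P.mulVec w i| = |∑ j, P i j * w j| := rfl
    _ ≤ ∑ j, |P i j * w j| := Finset.abs_sum_le_sum_abs _ _
    _ ≤ ∑ j, P i j * C := by
        apply Finset.sum_le_sum
        intro j _
        rw [abs_mul, abs_of_nonneg (hP.1 i j)]
        exact mul_le_mul_of_nonneg_left (hw j) (hP.1 i j)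
    _ = C := by rw [← Finset.sum_mul, hP.2 i, one_mul]

theorem stoch_ker_range {n : ℕ} {P : Matrix (Fin n) (Fin n) ℝ} (hP : IsStochastic P)
    {x w : Fin n → ℝ} (hx : P.mulVec x = x) (hw : w - P.mulVec w = x) : x = 0 := by
  have key : ∀ k : ℕ, ∀ i, |w i - k * x i| ≤ ∑ j, |w j| := by
    intro k
    induction k with
    | zero =>
      intro i
      simpa using Finset.single_le_sum (f := fun j => |w j|) (fun j _ => abs_nonneg _)
        (Finset.mem_univ i)
    | succ k ih =>
      intro i
      have h := stoch_abs_le hP (w := w - (k : ℝ) • x) (C := ∑ j, |w j|)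
        (by intro i; simpa using ih i) i
      have e : P.mulVec (w - (k : ℝ) • x) i = w i - ((k + 1 : ℕ) : ℝ) * x i := by
        rw [Matrix.mulVec_sub, Matrix.mulVec_smul, hx]
        have := congrFun hw i
        simp only [Pi.sub_apply, Pi.smul_apply, smul_eq_mul] at this ⊢
        push_cast
        linarith
      rwa [e] at h
  funext i
  by_contra hne
  have hpos : 0 < |x i| := abs_pos.mpr hne
  obtain ⟨k, hk⟩ := exists_nat_gt ((∑ j, |w j| + |w i|) / |x i|)
  rw [div_lt_iff₀ hpos] at hk
  have h1 := key k i
  have h2 : |(k : ℝ) * x i| = k * |x i| := by rw [abs_mul, Nat.abs_cast]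
  have h3 := abs_sub_abs_le_abs_sub ((k : ℝ) * x i) (w i)
  rw [abs_sub_comm] at h3
  linarith

theorem final_const {n : ℕ} {P : Matrix (Fin n) (Fin n) ℝ} (hP : IsStochastic P)
    {η : Fin n → ℝ} (hη : P.mulVec η = η) {F : Finset (Fin n)} (hF : IsFinalClass P F) :
    ∃ c, ∀ i ∈ F, η i = c := by
  obtain ⟨hne, hconn, hcl⟩ := hF
  obtain ⟨m, hm, hmax⟩ := F.exists_max_image η hne
  refine ⟨η m, fun i hi => ?_⟩
  have : i ∈ F ∧ η i = η m := by
    have hp := hconn m hm i hi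
    clear hi
    induction hp with
    | refl => exact ⟨hm, rfl⟩
    | @tail a b _ hab ih =>
      obtain ⟨haF, ha⟩ := ih
      refine ⟨hcl a haF b hab, ?_⟩
      have hs : ∑ j, P a j * (η m - η j) = 0 := by
        have h1 : ∑ j, P a j * η j = η a := congrFun hη a
        simp only [mul_sub, Finset.sum_sub_distrib]
        rw [← Finset.sum_mul, hP.2 a, h1, ha]
        ring
      have hnn : ∀ j ∈ Finset.univ, 0 ≤ P a j * (η m - η j) := by
        intro j _
        rcases (hP.1 a j).eq_or_lt with h | h
        · rw [← h]; simp
        · exact mul_nonneg h.le (sub_nonneg.mpr (hmax j (hcl a haF j h)))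
      have := (Finset.sum_eq_zero_iff_of_nonneg hnn).mp hs b (Finset.mem_univ b)
      rcases mul_eq_zero.mp this with h | h
      · exact absurd h hab.ne'
      · linarith
  exact this.2

/-- Let `P` be an `n×n` stochastic matrix and `r ∈ ℝⁿ`.  Then there is
a unique `η` with `Pη = η` and `η − r ∈ range(I − P)`; moreover for each final class `F`
of `P`, letting `π` be the (unique) stationary probability vector of the `F×F` submatrix
of `P`, one has `η_i = Σ_{j∈F} π_j r_j` for every `i ∈ F`. -/
theorem mean_payoff_vector_unique
    (n : ℕ) (P : Matrix (Fin n) (Fin n) ℝ) (hP : IsStochastic P) (r : Fin n → ℝ) :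
    ∃ η : Fin n → ℝ,
      (P.mulVec η = η ∧ η - r ∈ LinearMap.range (Matrix.mulVecLin (1 - P))) ∧
      (∀ η' : Fin n → ℝ, P.mulVec η' = η' →
        η' - r ∈ LinearMap.range (Matrix.mulVecLin (1 - P)) → η' = η) ∧
      ∀ F : Finset (Fin n), IsFinalClass P F →
        ∀ π : Fin n → ℝ, (∀ j, 0 ≤ π j) → (∀ j ∉ F, π j = 0) →
          (∑ j ∈ F, π j = 1) → (∀ j ∈ F, ∑ i ∈ F, π i * P i j = π j) →
          ∀ i ∈ F, η i = ∑ j ∈ F, π j * r j := by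
  set L := Matrix.mulVecLin (1 - P) with hL
  have hLa : ∀ w, L w = w - P.mulVec w := by
    intro w
    simp [hL, Matrix.sub_mulVec]
  have hdisj : Disjoint (LinearMap.ker L) (LinearMap.range L) := by
    rw [Submodule.disjoint_def]
    rintro x hx ⟨w, hw⟩
    rw [LinearMap.mem_ker, hLa, sub_eq_zero] at hx
    rw [hLa] at hw
    exact stoch_ker_range hP hx.symm hw
  have htop : LinearMap.ker L ⊔ LinearMap.range L = ⊤ := by
    apply Submodule.eq_top_of_disjoint _ _ _ hdisj
    rw [add_comm, LinearMap.finrank_range_add_finrank_ker]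
  obtain ⟨η, hη, z, hz, hsum⟩ := Submodule.mem_sup.mp (htop ▸ Submodule.mem_top : r ∈ _)
  rw [LinearMap.mem_ker, hLa, sub_eq_zero] at hη
  have hr : η - r ∈ LinearMap.range L := by
    have : η - r = -z := by rw [← hsum]; abel
    rw [this]
    exact neg_mem hz
  refine ⟨η, ⟨hη.symm, hr⟩, ?_, ?_⟩
  · intro η' h1 h2
    have h3 : η' - η ∈ LinearMap.range L := by
      have := sub_mem h2 hr
      simpa using this
    obtain ⟨w, hw⟩ := h3
    rw [hLa] at hw
    refine sub_eq_zero.mp (stoch_ker_range hP ?_ hw)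
    rw [Matrix.mulVec_sub, h1, ← hη]
  · intro F hF π _ hπ0 hπ1 hst i hi
    obtain ⟨c, hc⟩ := final_const hP hη.symm hF
    obtain ⟨w, hw⟩ := hr
    rw [hLa] at hw
    have hout : ∀ a ∈ F, ∀ j ∉ F, P a j = 0 := by
      intro a ha j hj
      by_contra hne
      exact hj (hF.2.2 a ha j (lt_of_le_of_ne (hP.1 a j) (Ne.symm hne)))
    have hPw : ∀ a ∈ F, P.mulVec w a = ∑ j ∈ F, P a j * w j := by
      intro a ha
      symm
      apply Finset.sum_subset (Finset.subset_univ F)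
      intro j _ hj
      rw [hout a ha j hj, zero_mul]
    have hinv : ∑ a ∈ F, π a * P.mulVec w a = ∑ a ∈ F, π a * w a := by
      calc ∑ a ∈ F, π a * P.mulVec w a = ∑ a ∈ F, ∑ j ∈ F, π a * P a j * w j := by
            apply Finset.sum_congr rfl
            intro a ha
            rw [hPw a ha, Finset.mul_sum]
            exact Finset.sum_congr rfl fun j _ => (mul_assoc _ _ _).symm
        _ = ∑ j ∈ F, ∑ a ∈ F, π a * P a j * w j := Finset.sum_comm
        _ = ∑ a ∈ F, π a * w a := by
            apply Finset.sum_congr rfl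
            intro j hj
            rw [← Finset.sum_mul, hst j hj]
    have hre : ∀ a ∈ F, π a * r a = π a * c - (π a * w a - π a * P.mulVec w a) := by
      intro a ha
      have := congrFun hw a
      simp only [Pi.sub_apply] at this
      rw [hc a ha] at this
      rw [← mul_sub, this]
      ring
    rw [Finset.sum_congr rfl hre, Finset.sum_sub_distrib, Finset.sum_sub_distrib, hinv,
      ← Finset.sum_mul, hπ1, hc i hi]
    ring
end
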